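/- arXiv:math-ph/0012023 — 2 statements merged into one kernel-verified Lean document; each statement's English description precedes it below -/
import Mathlib

section
/- Supremum representation of the rate functional: for every f ∈ L²(Λ,θ;ℝ^d), I(f) = sup_{r ∈ ℕ} I(f^r), where f^r = Σ_{k=1}^{γ_r} (γ_r ∫_{D_{r,k}} f dθ) 1_{D_{r,k}}. In particular, I(f^r) ≤ I(f) for all r and liminf_{r→∞} I(f^r) ≥ I(f). -/
open MeasureTheory Filter Topology ENNReal

/-!
Averaging over a cell pulls `i` down: this is Jensen's inequality, applied to the closed convex
epigraph of `i`, and summing over the cells gives `I(f^r) ≤ I(f)`. Conversely `f^r → f` in `L¹`: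
for bounded continuous `f` the convergence is pointwise because the cells shrink, and in general
one approximates `f` by such functions, averaging being an `L¹`-contraction (Jensen for the norm).
Passing to an a.e. convergent subsequence, Fatou's lemma and lower semicontinuity of `i` give
`I(f) ≤ liminf I(f^r)`.
-/

open scoped NNReal

section Jensen

variable {α E : Type*} {mα : MeasurableSpace α} {μ : Measure α}

lemma convexOn_nnreal_univ_of_forall_ofReal [AddCommGroup E] [Module ℝ E] {φ : E → ℝ≥0∞}
    (h : ∀ x y : E, ∀ t : ℝ, 0 ≤ t → t ≤ 1 →
      φ (t • x + (1 - t) • y) ≤ ENNReal.ofReal t * φ x + ENNReal.ofReal (1 - t) * φ y) :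
    ConvexOn ℝ≥0 Set.univ φ := by
  refine ⟨convex_univ, fun x _ y _ a b _ _ hab => ?_⟩
  have hb : (b : ℝ) = 1 - a := by rw [eq_sub_iff_add_eq', ← NNReal.coe_add, hab, NNReal.coe_one]
  have ha : (a : ℝ) ≤ 1 := sub_nonneg.1 (hb ▸ b.coe_nonneg)
  simpa only [← hb, ENNReal.ofReal_coe_nnreal, NNReal.smul_def, ENNReal.smul_def, smul_eq_mul]
    using h x y a a.coe_nonneg ha

lemma convexOn_nnreal_univ_enorm [NormedAddCommGroup E] [NormedSpace ℝ E] :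
    ConvexOn ℝ≥0 Set.univ (fun x : E => ‖x‖ₑ) := by
  refine ⟨convex_univ, fun x _ y _ a b _ _ _ => (enorm_add_le _ _).trans_eq ?_⟩
  simp only [NNReal.smul_def, enorm_smul, ENNReal.smul_def, smul_eq_mul, Real.enorm_of_nonneg,
    NNReal.coe_nonneg, ENNReal.ofReal_coe_nnreal]

lemma isClosed_setOf_nonneg_and_le_ofReal [TopologicalSpace E] {φ : E → ℝ≥0∞}
    (hφ : LowerSemicontinuous φ) :
    IsClosed {p : E × ℝ | 0 ≤ p.2 ∧ φ p.1 ≤ ENNReal.ofReal p.2} :=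
  (isClosed_le continuous_const continuous_snd).inter <|
    hφ.isClosed_epigraph.preimage (f := fun p : E × ℝ => (p.1, ENNReal.ofReal p.2))
      (continuous_fst.prodMk (ENNReal.continuous_ofReal.comp continuous_snd))

-- Without `0 ≤ p.2` convexity can fail, since `ENNReal.ofReal` sends negative reals to `0`.
lemma convex_setOf_nonneg_and_le_ofReal [AddCommGroup E] [Module ℝ E] {φ : E → ℝ≥0∞}
    (hφ : ConvexOn ℝ≥0 Set.univ φ) :
    Convex ℝ {p : E × ℝ | 0 ≤ p.2 ∧ φ p.1 ≤ ENNReal.ofReal p.2} := by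
  rintro ⟨x, s⟩ ⟨hs, hx⟩ ⟨y, t⟩ ⟨ht, hy⟩ a b ha hb hab
  refine ⟨add_nonneg (mul_nonneg ha hs) (mul_nonneg hb ht), ?_⟩
  lift a to ℝ≥0 using ha
  lift b to ℝ≥0 using hb
  calc φ (a • x + b • y)
      ≤ a • φ x + b • φ y :=
        hφ.2 (Set.mem_univ x) (Set.mem_univ y) zero_le zero_le (by exact_mod_cast hab)
    _ ≤ a • ENNReal.ofReal s + b • ENNReal.ofReal t := by gcongr
    _ = ENNReal.ofReal (a * s + b * t) := by
        rw [ENNReal.ofReal_add (mul_nonneg a.coe_nonneg hs) (mul_nonneg b.coe_nonneg ht),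
          ENNReal.ofReal_mul a.coe_nonneg, ENNReal.ofReal_mul b.coe_nonneg,
          ENNReal.ofReal_coe_nnreal, ENNReal.ofReal_coe_nnreal, ENNReal.smul_def, ENNReal.smul_def,
          smul_eq_mul, smul_eq_mul]

variable [NormedAddCommGroup E] [NormedSpace ℝ E] [CompleteSpace E] {φ : E → ℝ≥0∞} {f : α → E}

theorem map_average_le_laverage [IsFiniteMeasure μ] [NeZero μ]
    (hφ : LowerSemicontinuous φ) (hφ' : ConvexOn ℝ≥0 Set.univ φ) (hf : Integrable f μ) :
    φ (⨍ x, f x ∂μ) ≤ ⨍⁻ x, φ (f x) ∂μ := by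
  borelize E
  by_cases htop : ∫⁻ x, φ (f x) ∂μ = ∞
  · simp [laverage_eq, htop, ENNReal.top_div_of_ne_top]
  have hmeas : AEMeasurable (fun x => φ (f x)) μ :=
    hφ.measurable.comp_aemeasurable hf.aestronglyMeasurable.aemeasurable
  have hfin : ∀ᵐ x ∂μ, φ (f x) ≠ ∞ := (ae_lt_top' hmeas htop).mono fun _ => LT.lt.ne
  have hint : Integrable (fun x => (φ (f x)).toReal) μ :=
    integrable_toReal_of_lintegral_ne_top hmeas htop
  have hepi : (⨍ x, (f x, (φ (f x)).toReal) ∂μ) ∈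
      {p : E × ℝ | 0 ≤ p.2 ∧ φ p.1 ≤ ENNReal.ofReal p.2} := by
    refine (convex_setOf_nonneg_and_le_ofReal hφ').average_mem
      (isClosed_setOf_nonneg_and_le_ofReal hφ) ?_ (hf.prodMk hint)
    filter_upwards [hfin] with x hx
    exact ⟨ENNReal.toReal_nonneg, (ENNReal.ofReal_toReal hx).ge⟩
  rw [average_pair hf hint, ← toReal_laverage hmeas hfin] at hepi
  exact hepi.2.trans_eq (ENNReal.ofReal_toReal (laverage_lt_top htop).ne)

theorem measure_mul_map_setAverage_le_setLIntegral {s : Set α} (hφ : LowerSemicontinuous φ)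
    (hφ' : ConvexOn ℝ≥0 Set.univ φ) (hs : μ s ≠ ∞) (hf : IntegrableOn f s μ) :
    μ s * φ (⨍ x in s, f x ∂μ) ≤ ∫⁻ x in s, φ (f x) ∂μ := by
  rcases eq_or_ne (μ s) 0 with hs₀ | hs₀
  · simp [hs₀]
  have : IsFiniteMeasure (μ.restrict s) := isFiniteMeasure_restrict.2 hs
  have : NeZero (μ.restrict s) := ⟨by simpa using hs₀⟩
  rw [← measure_mul_setLAverage _ hs]
  gcongr
  exact map_average_le_laverage hφ hφ' hf

end Jensen

theorem lintegral_comp_le_liminf_of_tendstoInMeasure {α κ E : Type*} {mα : MeasurableSpace α}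
    {μ : Measure α} [PseudoEMetricSpace E] {φ : E → ℝ≥0∞} (hφ : LowerSemicontinuous φ)
    {l : Filter κ} [l.NeBot] [l.IsCountablyGenerated] {u : κ → α → E} {f : α → E}
    (hu : ∀ r, AEStronglyMeasurable (u r) μ) (huf : TendstoInMeasure μ u l f) :
    ∫⁻ x, φ (f x) ∂μ ≤ liminf (fun r => ∫⁻ x, φ (u r x) ∂μ) l := by
  borelize E
  obtain ⟨ms, hms_liminf, hms⟩ :=
    exists_seq_tendsto_liminf (f := l) (u := fun r => ∫⁻ x, φ (u r x) ∂μ)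
  have hms_measure : TendstoInMeasure μ (fun n => u (ms n)) atTop f :=
    fun ε hε => (huf ε hε).comp hms
  obtain ⟨ns, hns, hae⟩ := hms_measure.exists_seq_tendsto_ae'
  calc ∫⁻ x, φ (f x) ∂μ
      ≤ ∫⁻ x, liminf (fun n => φ (u (ms (ns n)) x)) atTop ∂μ :=
        lintegral_mono_ae <| hae.mono fun x hx =>
          (hφ.le_liminf (f x)).trans hx.liminf_le_liminf_comp
    _ ≤ liminf (fun n => ∫⁻ x, φ (u (ms (ns n)) x) ∂μ) atTop :=
        lintegral_liminf_le' fun n => hφ.measurable.comp_aemeasurable (hu _).aemeasurable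
    _ = liminf (fun r => ∫⁻ x, φ (u r x) ∂μ) l := (hms_liminf.comp hns).liminf_eq

/-- A family of measurable sets partitioning the space; cells may be empty. -/
structure IsMeasurablePartition {α ι : Type*} [MeasurableSpace α] (D : ι → Set α) : Prop where
  measurableSet (k : ι) : MeasurableSet (D k)
  pairwise_disjoint : Pairwise (Function.onFun Disjoint D)
  iUnion_eq_univ : ⋃ k, D k = Set.univ

/-- The step function equal on each cell `D k` to the average of `f` over `D k`, the paper's `f^r`.
It is `0` on cells of measure `0`, by the convention for averages. -/
noncomputable def partitionAverage {α ι E : Type*} [MeasurableSpace α] [NormedAddCommGroup E]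
    [NormedSpace ℝ E] (μ : Measure α) (D : ι → Set α) (f : α → E) (x : α) : E :=
  ∑' k, (D k).indicator (fun _ => ⨍ y in D k, f y ∂μ) x

section PartitionAverage

variable {α ι E : Type*} {mα : MeasurableSpace α} {μ : Measure α} {D : ι → Set α}
  [NormedAddCommGroup E] [NormedSpace ℝ E] {f g : α → E} {k : ι} {x : α}

namespace IsMeasurablePartition

lemma exists_mem (hD : IsMeasurablePartition D) (x : α) : ∃ k, x ∈ D k :=
  Set.mem_iUnion.1 (hD.iUnion_eq_univ ▸ Set.mem_univ x)

lemma lintegral_eq_tsum [Countable ι] (hD : IsMeasurablePartition D) (g : α → ℝ≥0∞) :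
    ∫⁻ x, g x ∂μ = ∑' k, ∫⁻ x in D k, g x ∂μ := by
  rw [← lintegral_iUnion hD.measurableSet hD.pairwise_disjoint, hD.iUnion_eq_univ,
    Measure.restrict_univ]

lemma partitionAverage_of_mem (hD : IsMeasurablePartition D) (hx : x ∈ D k) :
    partitionAverage μ D f x = ⨍ y in D k, f y ∂μ := by
  have hoff : ∀ j ≠ k, (D j).indicator (fun _ => ⨍ y in D j, f y ∂μ) x = 0 := fun j hj =>
    Set.indicator_of_notMem (fun hxj => (hD.pairwise_disjoint hj).notMem_of_mem_left hxj hx) _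
  rw [partitionAverage, tsum_eq_single k hoff, Set.indicator_of_mem hx]

lemma aestronglyMeasurable_partitionAverage [Countable ι] (hD : IsMeasurablePartition D) :
    AEStronglyMeasurable (partitionAverage μ D f) μ := by
  rw [← Measure.restrict_univ (μ := μ), ← hD.iUnion_eq_univ, aestronglyMeasurable_iUnion_iff]
  exact fun k => aestronglyMeasurable_const.congr <| Set.EqOn.aeEq_restrict
    (fun _ hx => (hD.partitionAverage_of_mem hx).symm) (hD.measurableSet k)

lemma partitionAverage_sub (hD : IsMeasurablePartition D) (hf : Integrable f μ)
    (hg : Integrable g μ) :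
    partitionAverage μ D (f - g) = partitionAverage μ D f - partitionAverage μ D g := by
  funext x
  obtain ⟨k, hk⟩ := hD.exists_mem x
  simp only [Pi.sub_apply, hD.partitionAverage_of_mem hk, setAverage_eq]
  rw [integral_sub hf.restrict hg.restrict, smul_sub]

lemma norm_partitionAverage_le [IsFiniteMeasure μ] (hD : IsMeasurablePartition D) {C : ℝ}
    (hC : ∀ x, ‖f x‖ ≤ C) (x : α) : ‖partitionAverage μ D f x‖ ≤ C := by
  obtain ⟨k, hk⟩ := hD.exists_mem x
  have hC₀ : 0 ≤ C := (norm_nonneg _).trans (hC x)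
  rw [hD.partitionAverage_of_mem hk, setAverage_eq, norm_smul, norm_inv,
    Real.norm_of_nonneg measureReal_nonneg]
  calc (μ.real (D k))⁻¹ * ‖∫ y in D k, f y ∂μ‖
      ≤ (μ.real (D k))⁻¹ * (C * μ.real (D k)) := by
        gcongr
        exact norm_setIntegral_le_of_norm_le_const (measure_lt_top μ _) fun y _ => hC y
    _ ≤ C := by
        rw [mul_left_comm]
        exact mul_le_of_le_one_right hC₀ (inv_mul_le_one)

variable [CompleteSpace E]

theorem lintegral_comp_partitionAverage_le [Countable ι] [IsFiniteMeasure μ]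
    (hD : IsMeasurablePartition D) {φ : E → ℝ≥0∞} (hφ : LowerSemicontinuous φ)
    (hφ' : ConvexOn ℝ≥0 Set.univ φ) (hf : Integrable f μ) :
    ∫⁻ x, φ (partitionAverage μ D f x) ∂μ ≤ ∫⁻ x, φ (f x) ∂μ := by
  rw [hD.lintegral_eq_tsum, hD.lintegral_eq_tsum]
  refine ENNReal.tsum_le_tsum fun k => ?_
  calc ∫⁻ x in D k, φ (partitionAverage μ D f x) ∂μ
      = ∫⁻ _ in D k, φ (⨍ y in D k, f y ∂μ) ∂μ :=
        setLIntegral_congr_fun (hD.measurableSet k) fun x hx => by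
          simp only [hD.partitionAverage_of_mem hx]
    _ = μ (D k) * φ (⨍ y in D k, f y ∂μ) := by rw [setLIntegral_const, mul_comm]
    _ ≤ ∫⁻ x in D k, φ (f x) ∂μ :=
        measure_mul_map_setAverage_le_setLIntegral hφ hφ' (measure_ne_top μ _) hf.integrableOn

theorem eLpNorm_one_partitionAverage_le [Countable ι] [IsFiniteMeasure μ]
    (hD : IsMeasurablePartition D) (hf : Integrable f μ) :
    eLpNorm (partitionAverage μ D f) 1 μ ≤ eLpNorm f 1 μ := by
  simpa only [eLpNorm_one_eq_lintegral_enorm] using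
    hD.lintegral_comp_partitionAverage_le continuous_enorm.lowerSemicontinuous
      convexOn_nnreal_univ_enorm hf

end IsMeasurablePartition

lemma partitionAverage_eq_sum_of_measureReal_eq [Fintype ι] {c : ℝ}
    (hc : ∀ k, μ.real (D k) = c) :
    partitionAverage μ D f x = ∑ k, (D k).indicator (fun _ => c⁻¹ • ∫ y in D k, f y ∂μ) x := by
  simp only [partitionAverage, tsum_fintype, setAverage_eq, hc]

lemma ae_forall_mem_imp_measure_ne_zero [Countable ι] (μ : Measure α) (D : ι → Set α) :
    ∀ᵐ x ∂μ, ∀ k, x ∈ D k → μ (D k) ≠ 0 := by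
  refine ae_all_iff.2 fun k => ?_
  rcases eq_or_ne (μ (D k)) 0 with hk | hk
  · filter_upwards [measure_eq_zero_iff_ae_notMem.1 hk] with x hx hxk
    exact absurd hxk hx
  · exact Eventually.of_forall fun _ _ => hk

end PartitionAverage

section Convergence

variable {α κ E : Type*} [PseudoEMetricSpace α] [MeasurableSpace α] {μ : Measure α}
  [IsFiniteMeasure μ] [NormedAddCommGroup E] [NormedSpace ℝ E] [CompleteSpace E]
  {ι : κ → Type*} {D : ∀ r, ι r → Set α} {l : Filter κ}

theorem tendsto_partitionAverage_of_continuousAt (hD : ∀ r, IsMeasurablePartition (D r))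
    (hdiam : Tendsto (fun r => ⨆ k, Metric.ediam (D r k)) l (𝓝 0)) {g : α → E} {x : α}
    (hg : Integrable g μ) (hgx : ContinuousAt g x)
    (hx : ∀ r k, x ∈ D r k → μ (D r k) ≠ 0) :
    Tendsto (fun r => partitionAverage μ (D r) g x) l (𝓝 (g x)) := by
  refine Metric.nhds_basis_closedBall.tendsto_right_iff.2 fun ε hε => ?_
  obtain ⟨δ, hδ, hball⟩ := EMetric.mem_nhds_iff.1 (hgx (Metric.closedBall_mem_nhds (g x) hε))
  filter_upwards [hdiam.eventually_lt_const hδ] with r hr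
  obtain ⟨k, hk⟩ := (hD r).exists_mem x
  rw [(hD r).partitionAverage_of_mem hk]
  refine (convex_closedBall (g x) ε).set_average_mem Metric.isClosed_closedBall (hx r k hk)
    (measure_ne_top μ _) (ae_restrict_of_forall_mem ((hD r).measurableSet k) fun y hy => ?_)
    hg.integrableOn
  exact hball <| calc
    edist y x ≤ Metric.ediam (D r k) := Metric.edist_le_ediam_of_mem hy hk
    _ ≤ ⨆ k, Metric.ediam (D r k) := le_iSup (fun k => Metric.ediam (D r k)) k
    _ < δ := hr

variable [Countable κ] [l.IsCountablyGenerated] [∀ r, Countable (ι r)]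

theorem tendsto_eLpNorm_one_partitionAverage_sub_of_continuous_of_bounded
    (hD : ∀ r, IsMeasurablePartition (D r))
    (hdiam : Tendsto (fun r => ⨆ k, Metric.ediam (D r k)) l (𝓝 0)) {g : α → E} {C : ℝ}
    (hg : Integrable g μ) (hgc : Continuous g) (hC : ∀ x, ‖g x‖ ≤ C) :
    Tendsto (fun r => eLpNorm (partitionAverage μ (D r) g - g) 1 μ) l (𝓝 0) := by
  have hbound (r : κ) (x : α) :
      ‖partitionAverage μ (D r) g x - g x‖ₑ ≤ ENNReal.ofReal (C + C) := by
    rw [← ofReal_norm]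
    exact ENNReal.ofReal_le_ofReal <|
      norm_sub_le_of_le ((hD r).norm_partitionAverage_le hC x) (hC x)
  have hlim : ∀ᵐ x ∂μ, Tendsto (fun r => ‖partitionAverage μ (D r) g x - g x‖ₑ) l (𝓝 0) := by
    filter_upwards [ae_all_iff.2 fun r => ae_forall_mem_imp_measure_ne_zero μ (D r)] with x hx
    simpa using ((tendsto_partitionAverage_of_continuousAt hD hdiam hg
      hgc.continuousAt hx).sub_const (g x)).enorm
  simpa [eLpNorm_one_eq_lintegral_enorm] using
    tendsto_lintegral_filter_of_dominated_convergence' (fun _ => ENNReal.ofReal (C + C))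
      (Eventually.of_forall fun r =>
        ((hD r).aestronglyMeasurable_partitionAverage.sub hg.aestronglyMeasurable).enorm)
      (Eventually.of_forall fun r => Eventually.of_forall (hbound r))
      (by simp [ENNReal.mul_eq_top]) hlim

variable [BorelSpace α]

theorem tendsto_eLpNorm_one_partitionAverage_sub (hD : ∀ r, IsMeasurablePartition (D r))
    (hdiam : Tendsto (fun r => ⨆ k, Metric.ediam (D r k)) l (𝓝 0)) {f : α → E}
    (hf : Integrable f μ) :
    Tendsto (fun r => eLpNorm (partitionAverage μ (D r) f - f) 1 μ) l (𝓝 0) := by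
  refine ENNReal.tendsto_nhds_zero.2 fun ε hε => ?_
  have hε₃ : 0 < ε / 3 := ENNReal.div_pos hε.ne' ENNReal.ofNat_ne_top
  obtain ⟨g, hfg, hg⟩ := (memLp_one_iff_integrable.2 hf).exists_boundedContinuous_eLpNorm_sub_le
    ENNReal.one_ne_top hε₃.ne'
  rw [memLp_one_iff_integrable] at hg
  filter_upwards [ENNReal.tendsto_nhds_zero.1
    (tendsto_eLpNorm_one_partitionAverage_sub_of_continuous_of_bounded hD hdiam hg
      g.continuous g.norm_coe_le_norm) _ hε₃] with r hr
  have hg_meas : AEStronglyMeasurable (partitionAverage μ (D r) g - ⇑g) μ :=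
    (hD r).aestronglyMeasurable_partitionAverage.sub hg.aestronglyMeasurable
  have hgf_meas : AEStronglyMeasurable (⇑g - f) μ :=
    hg.aestronglyMeasurable.sub hf.aestronglyMeasurable
  calc eLpNorm (partitionAverage μ (D r) f - f) 1 μ
      = eLpNorm (partitionAverage μ (D r) (f - ⇑g) +
          ((partitionAverage μ (D r) g - ⇑g) + (⇑g - f))) 1 μ := by
        rw [(hD r).partitionAverage_sub hf hg, sub_add_sub_cancel, sub_add_sub_cancel]
    _ ≤ eLpNorm (partitionAverage μ (D r) (f - ⇑g)) 1 μ +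
          (eLpNorm (partitionAverage μ (D r) g - ⇑g) 1 μ + eLpNorm (⇑g - f) 1 μ) :=
        (eLpNorm_add_le (hD r).aestronglyMeasurable_partitionAverage (hg_meas.add hgf_meas)
          le_rfl).trans (add_le_add_right (eLpNorm_add_le hg_meas hgf_meas le_rfl) _)
    _ ≤ ε / 3 + (ε / 3 + ε / 3) := by
        gcongr
        · exact ((hD r).eLpNorm_one_partitionAverage_le (hf.sub hg)).trans hfg
        · rwa [eLpNorm_sub_comm]
    _ = ε := by rw [← add_assoc, ENNReal.add_thirds]

theorem rate_functional_sup_representation_general [l.NeBot] {i : E → ℝ≥0∞}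
    (hilsc : LowerSemicontinuous i) (hiconv : ConvexOn ℝ≥0 Set.univ i)
    (hD : ∀ r, IsMeasurablePartition (D r))
    (hdiam : Tendsto (fun r => ⨆ k, Metric.ediam (D r k)) l (𝓝 0)) {f : α → E}
    (hf : Integrable f μ) :
    ∫⁻ x, i (f x) ∂μ = (⨆ r, ∫⁻ x, i (partitionAverage μ (D r) f x) ∂μ)
      ∧ (∀ r, ∫⁻ x, i (partitionAverage μ (D r) f x) ∂μ ≤ ∫⁻ x, i (f x) ∂μ)
      ∧ ∫⁻ x, i (f x) ∂μ ≤ liminf (fun r => ∫⁻ x, i (partitionAverage μ (D r) f x) ∂μ) l := by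
  have hle (r : κ) : ∫⁻ x, i (partitionAverage μ (D r) f x) ∂μ ≤ ∫⁻ x, i (f x) ∂μ :=
    (hD r).lintegral_comp_partitionAverage_le hilsc hiconv hf
  have hmeas (r : κ) : AEStronglyMeasurable (partitionAverage μ (D r) f) μ :=
    (hD r).aestronglyMeasurable_partitionAverage
  have hliminf : ∫⁻ x, i (f x) ∂μ ≤
      liminf (fun r => ∫⁻ x, i (partitionAverage μ (D r) f x) ∂μ) l :=
    lintegral_comp_le_liminf_of_tendstoInMeasure hilsc hmeas <|
      tendstoInMeasure_of_tendsto_eLpNorm one_ne_zero hmeas hf.aestronglyMeasurable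
        (tendsto_eLpNorm_one_partitionAverage_sub hD hdiam hf)
  refine ⟨(hliminf.trans ?_).antisymm (iSup_le hle), hle, hliminf⟩
  exact liminf_le_of_frequently_le' <| Frequently.of_forall <| le_iSup _

end Convergence

/-- Supremum representation of the rate functional: for every `f ∈ L²(Λ,θ;ℝ^d)`,
`I(f) = sup_{r} I(f^r)`, where `f^r = Σ_k (γ_r ∫_{D_{r,k}} f dθ) 1_{D_{r,k}}`.
In particular `I(f^r) ≤ I(f)` for all `r` and `liminf_{r→∞} I(f^r) ≥ I(f)`. -/
theorem rate_functional_sup_representation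
    {Λ : Type*} [MetricSpace Λ] [TopologicalSpace.SeparableSpace Λ] [CompleteSpace Λ]
    [MeasurableSpace Λ] [BorelSpace Λ]
    (θ : Measure Λ) [IsProbabilityMeasure θ]
    (d : ℕ) (hd : 0 < d)
    (i : EuclideanSpace ℝ (Fin d) → ℝ≥0∞)
    (hilsc : LowerSemicontinuous i)
    (hiconv : ∀ x y : EuclideanSpace ℝ (Fin d), ∀ t : ℝ, 0 ≤ t → t ≤ 1 →
      i (t • x + (1 - t) • y) ≤ ENNReal.ofReal t * i x + ENNReal.ofReal (1 - t) * i y)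
    (I : Lp (EuclideanSpace ℝ (Fin d)) 2 θ → ℝ≥0∞)
    (hI : ∀ f, I f = ∫⁻ x, i (f x) ∂θ)
    (γ : ℕ → ℕ) (hγpos : ∀ r, 0 < γ r) (hγtop : Tendsto γ atTop atTop)
    (D : (r : ℕ) → Fin (γ r) → Set Λ)
    (hDmeas : ∀ r k, MeasurableSet (D r k))
    (hDdisj : ∀ r, ∀ k k' : Fin (γ r), k ≠ k' → Disjoint (D r k) (D r k'))
    (hDcover : ∀ r, (⋃ k, D r k) = Set.univ)
    (hDmeasure : ∀ r k, θ (D r k) = 1 / (γ r : ℝ≥0∞))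
    (hDdiam : Tendsto (fun r => ⨆ k : Fin (γ r), EMetric.diam (D r k)) atTop (𝓝 0))
    (f : Lp (EuclideanSpace ℝ (Fin d)) 2 θ)
    (fr : ℕ → Λ → EuclideanSpace ℝ (Fin d))
    (hfr : ∀ r x, fr r x = ∑ k : Fin (γ r),
      Set.indicator (D r k) (fun _ => (γ r : ℝ) • ∫ y in D r k, f y ∂θ) x) :
    I f = (⨆ r : ℕ, ∫⁻ x, i (fr r x) ∂θ)
      ∧ (∀ r : ℕ, ∫⁻ x, i (fr r x) ∂θ ≤ I f)
      ∧ I f ≤ liminf (fun r => ∫⁻ x, i (fr r x) ∂θ) atTop := by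
  have hD (r : ℕ) : IsMeasurablePartition (D r) := ⟨hDmeas r, hDdisj r, hDcover r⟩
  have hfr' : fr = fun r => partitionAverage θ (D r) f := by
    funext r x
    have hmass (k : Fin (γ r)) : θ.real (D r k) = (γ r : ℝ)⁻¹ := by
      simp [measureReal_def, hDmeasure]
    rw [hfr, partitionAverage_eq_sum_of_measureReal_eq hmass, inv_inv]
  subst hfr'
  rw [hI]
  exact rate_functional_sup_representation_general hilsc
    (convexOn_nnreal_univ_of_forall_ofReal hiconv) hD hDdiam
    ((Lp.memLp f).integrable one_le_two)
end

section
/- Theorem 4.2: assume there exists δ > 0 such that ∫_{ℝ^d} exp(δ|y|²/2) ρ(dy) < ∞. Then for every M < ∞ the level set {f ∈ L²(Λ,θ;ℝ^d) : I(f) ≤ M} is compact with respect to the weak topology on L²(Λ,θ;ℝ^d), where i is the Cramér rate function of ρ and I(f) = ∫_Λ i(f(x)) θ(dx). -/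
open MeasureTheory Filter Topology ENNReal

/-!
Completing the square turns the Gaussian moment bound into `c α ≤ ‖α‖² / (2δ) + K`, so testing the
supremum defining `i z` at `α = δ z` gives the quadratic growth `δ/2 * ‖z‖² ≤ i z + K`; hence the
level sets of `I` are norm bounded. As a supremum of affine functions, `i` is convex and lower
semicontinuous. Convexity passes to `I`, and so does strong lower semicontinuity by Fatou's lemma
along an almost everywhere convergent subsequence. A norm-closed convex set is weakly closed by
Hahn-Banach, and a bounded weakly closed set in a Hilbert space is weakly compact by Banach-Alaoglu.
-/

open scoped NNReal

/-! ### Weak compactness in Hilbert spaces -/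

section WeakCompactness

variable {𝕜 H : Type*} [RCLike 𝕜] [NormedAddCommGroup H] [InnerProductSpace 𝕜 H] [CompleteSpace H]

theorem isInducing_inner_toWeakSpace_symm :
    IsInducing fun (f : WeakSpace 𝕜 H) (h : H) => inner 𝕜 ((toWeakSpace 𝕜 H).symm f) h := by
  let evalDual (f : WeakSpace 𝕜 H) (ψ : StrongDual 𝕜 H) : 𝕜 := ψ ((toWeakSpace 𝕜 H).symm f)
  let conjRiesz (u : H → 𝕜) (ψ : StrongDual 𝕜 H) : 𝕜 :=
    star (u ((InnerProductSpace.toDual 𝕜 H).symm ψ))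
  have inner_continuous : Continuous fun (f : WeakSpace 𝕜 H) (h : H) =>
      inner 𝕜 ((toWeakSpace 𝕜 H).symm f) h := by
    refine continuous_pi fun h => ?_
    have hcont : Continuous fun f : WeakSpace 𝕜 H => inner 𝕜 h ((toWeakSpace 𝕜 H).symm f) :=
      WeakBilin.eval_continuous _ (InnerProductSpace.toDual 𝕜 H h)
    simpa only [Function.comp_def, inner_conj_symm] using RCLike.continuous_conj.comp hcont
  have conjRiesz_continuous : Continuous conjRiesz := by fun_prop
  have evalDual_inducing : IsInducing evalDual := ⟨rfl⟩
  have factorization : (conjRiesz ∘ fun (f : WeakSpace 𝕜 H) (h : H) =>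
      inner 𝕜 ((toWeakSpace 𝕜 H).symm f) h) = evalDual := by
    funext f ψ
    simp [conjRiesz, evalDual]
  exact .of_comp inner_continuous conjRiesz_continuous (factorization ▸ evalDual_inducing)

theorem isCompact_toWeakSpace_image_iff_inner {s : Set H} :
    IsCompact (toWeakSpace 𝕜 H '' s) ↔
      @IsCompact H (TopologicalSpace.induced (fun f h : H => inner 𝕜 f h) Pi.topologicalSpace)
        s := by
  let _ : TopologicalSpace H := .induced (fun f h : H => inner 𝕜 f h) Pi.topologicalSpace
  rw [isInducing_inner_toWeakSpace_symm.isCompact_iff, Set.image_image]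
  simp only [LinearEquiv.symm_apply_apply]
  exact (@IsInducing.isCompact_iff _ _ (_) _ s _ ⟨rfl⟩).symm

theorem isCompact_toWeakSpace_image_closedBall (r : ℝ) :
    IsCompact (toWeakSpace 𝕜 H '' Metric.closedBall 0 r) := by
  let riesz (φ : WeakDual 𝕜 H) : WeakSpace 𝕜 H :=
    toWeakSpace 𝕜 H ((InnerProductSpace.toDual 𝕜 H).symm (WeakDual.toStrongDual φ))
  have riesz_continuous : Continuous riesz := by
    refine isInducing_inner_toWeakSpace_symm.continuous_iff.2 (continuous_pi fun h => ?_)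
    simpa [riesz, Function.comp_def] using WeakDual.eval_continuous h
  convert (WeakDual.isCompact_closedBall 0 r).image riesz_continuous using 1
  refine Set.Subset.antisymm ?_ ?_
  · rintro _ ⟨f, hf, rfl⟩
    exact ⟨StrongDual.toWeakDual (InnerProductSpace.toDual 𝕜 H f), by simpa using hf,
      by simp [riesz]⟩
  · rintro _ ⟨φ, hφ, rfl⟩
    exact ⟨_, by simpa using hφ, rfl⟩

theorem isCompact_toWeakSpace_image_of_convex [NormedSpace ℝ H] [IsScalarTower ℝ 𝕜 H] {s : Set H}
    (hconv : Convex ℝ s) (hclosed : IsClosed s) (hbdd : Bornology.IsBounded s) :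
    IsCompact (toWeakSpace 𝕜 H '' s) := by
  have hwclosed : IsClosed (toWeakSpace 𝕜 H '' s) := by
    rw [← closure_eq_iff_isClosed, ← hconv.toWeakSpace_closure 𝕜, hclosed.closure_eq]
  obtain ⟨r, hr⟩ := hbdd.subset_closedBall 0
  exact (isCompact_toWeakSpace_image_closedBall r).of_isClosed_subset hwclosed (Set.image_mono hr)

end WeakCompactness

/-! ### Integral functionals -/

section IntegralFunctional

variable {Λ E : Type*} [MeasurableSpace Λ] {θ : Measure Λ} [NormedAddCommGroup E] {p : ℝ≥0∞}

/-- The functional `f ↦ ∫ φ(f(x)) θ(dx)` on `L^p(Λ, θ; E)` with a nonnegative integrand `φ`,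
possibly infinite. -/
noncomputable def integralFunctional (φ : E → ℝ≥0∞) (f : Lp E p θ) : ℝ≥0∞ :=
  ∫⁻ x, φ (f x) ∂θ

theorem convexOn_integralFunctional [NormedSpace ℝ E] [MeasurableSpace E] [BorelSpace E]
    {φ : E → ℝ≥0∞} (hconv : ConvexOn ℝ≥0 Set.univ φ) (hmeas : Measurable φ) :
    ConvexOn ℝ≥0 Set.univ (integralFunctional φ : Lp E p θ → ℝ≥0∞) := by
  refine ⟨convex_univ, fun f _ g _ a b _ _ hab => ?_⟩
  have hφf : AEMeasurable (fun x => φ (f x)) θ :=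
    hmeas.comp_aemeasurable (Lp.aestronglyMeasurable f).aemeasurable
  calc ∫⁻ x, φ ((a • f + b • g : Lp E p θ) x) ∂θ
      ≤ ∫⁻ x, (a • φ (f x) + b • φ (g x)) ∂θ := by
        refine lintegral_mono_ae ?_
        filter_upwards [Lp.coeFn_add (a • f) (b • g), Lp.coeFn_smul (a : ℝ) f,
          Lp.coeFn_smul (b : ℝ) g] with x hadd hf hg
        rw [hadd, Pi.add_apply, NNReal.smul_def a f, NNReal.smul_def b g, hf, hg]
        exact hconv.2 (Set.mem_univ _) (Set.mem_univ _) zero_le zero_le hab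
    _ = ∫⁻ x, a • φ (f x) ∂θ + ∫⁻ x, b • φ (g x) ∂θ := lintegral_add_left' (hφf.const_smul a) _
    _ = a • ∫⁻ x, φ (f x) ∂θ + b • ∫⁻ x, φ (g x) ∂θ := by
        simp only [ENNReal.smul_def, smul_eq_mul, lintegral_const_mul' _ _ ENNReal.coe_ne_top]

theorem lowerSemicontinuous_integralFunctional [MeasurableSpace E] [BorelSpace E] [Fact (1 ≤ p)]
    {φ : E → ℝ≥0∞} (hφ : LowerSemicontinuous φ) :
    LowerSemicontinuous (integralFunctional φ : Lp E p θ → ℝ≥0∞) := by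
  refine lowerSemicontinuous_iff_isClosed_preimage.2 fun M => IsSeqClosed.isClosed ?_
  intro u f hu hlim
  obtain ⟨n, -, hae⟩ := (tendstoInMeasure_of_tendsto_Lp hlim).exists_seq_tendsto_ae
  have hmeas (k : ℕ) : AEMeasurable (fun x => φ (u (n k) x)) θ :=
    hφ.measurable.comp_aemeasurable (Lp.aestronglyMeasurable _).aemeasurable
  calc ∫⁻ x, φ (f x) ∂θ ≤ ∫⁻ x, liminf (fun k => φ (u (n k) x)) atTop ∂θ :=
        lintegral_mono_ae <| hae.mono fun x hx =>
          (hφ.le_liminf (f x)).trans (liminf_le_liminf_of_le hx)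
    _ ≤ liminf (fun k => ∫⁻ x, φ (u (n k) x) ∂θ) atTop := lintegral_liminf_le' hmeas
    _ ≤ M := liminf_le_of_le (by isBoundedDefault) fun b hb =>
        (hb.exists.elim fun k hk => hk.trans (hu (n k)))

theorem mul_enorm_rpow_le_integralFunctional_add [Fact (1 ≤ p)] (hp : p ≠ ∞) {φ : E → ℝ≥0∞}
    {a b : ℝ≥0∞} (hgrowth : ∀ z, a * ‖z‖ₑ ^ p.toReal ≤ φ z + b) (f : Lp E p θ) :
    a * ‖f‖ₑ ^ p.toReal ≤ integralFunctional φ f + b * θ Set.univ := by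
  have hp0 : p ≠ 0 := (zero_lt_one.trans_le (Fact.out : 1 ≤ p)).ne'
  calc a * ‖f‖ₑ ^ p.toReal
      = a * ∫⁻ x, ‖f x‖ₑ ^ p.toReal ∂θ := by
        rw [Lp.enorm_def, eLpNorm_eq_eLpNorm' hp0 hp,
          lintegral_rpow_enorm_eq_rpow_eLpNorm' (ENNReal.toReal_pos hp0 hp)]
    _ ≤ ∫⁻ x, a * ‖f x‖ₑ ^ p.toReal ∂θ := lintegral_const_mul_le _ _
    _ ≤ ∫⁻ x, (φ (f x) + b) ∂θ := lintegral_mono fun x => hgrowth (f x)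
    _ = integralFunctional φ f + b * θ Set.univ := by
        rw [lintegral_add_right _ measurable_const, lintegral_const, integralFunctional]

theorem isBounded_integralFunctional_le [IsFiniteMeasure θ] [Fact (1 ≤ p)] (hp : p ≠ ∞)
    {φ : E → ℝ≥0∞} {a b : ℝ≥0∞} (ha : a ≠ 0) (hb : b ≠ ∞)
    (hgrowth : ∀ z, a * ‖z‖ₑ ^ p.toReal ≤ φ z + b) {M : ℝ≥0∞} (hM : M ≠ ∞) :
    Bornology.IsBounded {f : Lp E p θ | integralFunctional φ f ≤ M} := by
  have hp0 : p ≠ 0 := (zero_lt_one.trans_le (Fact.out : 1 ≤ p)).ne'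
  have hq : 0 < p.toReal := ENNReal.toReal_pos hp0 hp
  have hK : M + b * θ Set.univ ≠ ∞ :=
    ENNReal.add_ne_top.2 ⟨hM, ENNReal.mul_ne_top hb (measure_ne_top θ _)⟩
  set R : ℝ≥0∞ := ((M + b * θ Set.univ) / a) ^ p.toReal⁻¹
  have hR : R ≠ ∞ :=
    ENNReal.rpow_ne_top_of_nonneg (inv_nonneg.2 hq.le) (ENNReal.div_ne_top hK ha)
  refine isBounded_iff_forall_norm_le.2 ⟨R.toReal, fun f hf => ?_⟩
  have hfR : ‖f‖ₑ ≤ R := by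
    rw [ENNReal.le_rpow_inv_iff hq, ENNReal.le_div_iff_mul_le (.inl ha) (.inr hK), mul_comm]
    exact (mul_enorm_rpow_le_integralFunctional_add hp hgrowth f).trans (by gcongr; exact hf)
  simpa using ENNReal.toReal_mono hR hfR

theorem isCompact_toWeakSpace_integralFunctional_le [InnerProductSpace ℝ E] [CompleteSpace E]
    [MeasurableSpace E] [BorelSpace E] [IsFiniteMeasure θ] {φ : E → ℝ≥0∞}
    (hconv : ConvexOn ℝ≥0 Set.univ φ) (hlsc : LowerSemicontinuous φ) {a b : ℝ≥0∞}
    (ha : a ≠ 0) (hb : b ≠ ∞) (hgrowth : ∀ z, a * ‖z‖ₑ ^ 2 ≤ φ z + b) {M : ℝ≥0∞} (hM : M ≠ ∞) :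
    IsCompact (toWeakSpace ℝ (Lp E 2 θ) '' {f : Lp E 2 θ | integralFunctional φ f ≤ M}) := by
  refine isCompact_toWeakSpace_image_of_convex ?_ ?_ ?_
  · simpa [NNReal.convex_iff] using
      (convexOn_integralFunctional hconv hlsc.measurable).convex_le M
  · exact (lowerSemicontinuous_integralFunctional hlsc).isClosed_preimage M
  · exact isBounded_integralFunctional_le ofNat_ne_top ha hb (by simpa using hgrowth) hM

end IntegralFunctional

/-! ### The Cramér rate function -/

section LegendreTransform

variable {E : Type*} [NormedAddCommGroup E] [InnerProductSpace ℝ E]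

/-- The positive part `z ↦ sup_α (⟨α, z⟩ - c(α))⁺` of the Legendre-Fenchel transform of `c`. It is
the full transform as soon as `c 0 ≤ 0`, in particular when `c` is the cumulant generating function
of a probability measure, and the transform is then the Cramér rate function. -/
noncomputable def legendreTransform (c : E → ℝ) (z : E) : ℝ≥0∞ :=
  ⨆ α, ENNReal.ofReal (inner ℝ α z - c α)

theorem ofReal_inner_sub_le_legendreTransform (c : E → ℝ) (α z : E) :
    ENNReal.ofReal (inner ℝ α z - c α) ≤ legendreTransform c z :=
  le_iSup (fun α => ENNReal.ofReal (inner ℝ α z - c α)) α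

theorem lowerSemicontinuous_legendreTransform (c : E → ℝ) :
    LowerSemicontinuous (legendreTransform c) :=
  lowerSemicontinuous_iSup fun _ =>
    (ENNReal.continuous_ofReal.comp (by fun_prop)).lowerSemicontinuous

theorem convexOn_legendreTransform (c : E → ℝ) :
    ConvexOn ℝ≥0 Set.univ (legendreTransform c) := by
  refine ⟨convex_univ, fun x _ y _ a b _ _ hab => iSup_le fun α => ?_⟩
  have affine : inner ℝ α (a • x + b • y) - c α =
      a * (inner ℝ α x - c α) + b * (inner ℝ α y - c α) := by
    have hab' : (a : ℝ) + b = 1 := mod_cast hab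
    rw [NNReal.smul_def, NNReal.smul_def, inner_add_right, inner_smul_right, inner_smul_right]
    linear_combination c α * hab'
  calc ENNReal.ofReal (inner ℝ α (a • x + b • y) - c α)
      ≤ a * ENNReal.ofReal (inner ℝ α x - c α) + b * ENNReal.ofReal (inner ℝ α y - c α) := by
        rw [affine]
        refine ENNReal.ofReal_add_le.trans_eq ?_
        rw [ENNReal.ofReal_mul a.coe_nonneg, ENNReal.ofReal_mul b.coe_nonneg,
          ENNReal.ofReal_coe_nnreal, ENNReal.ofReal_coe_nnreal]
    _ ≤ a * legendreTransform c x + b * legendreTransform c y := by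
        gcongr
        · exact ofReal_inner_sub_le_legendreTransform c α x
        · exact ofReal_inner_sub_le_legendreTransform c α y

theorem ofReal_mul_enorm_sq_le_legendreTransform_add {c : E → ℝ} {δ K : ℝ} (hδ : 0 < δ)
    (hc : ∀ α, c α ≤ ‖α‖ ^ 2 / (2 * δ) + K) (z : E) :
    ENNReal.ofReal (δ / 2) * ‖z‖ₑ ^ 2 ≤ legendreTransform c z + ENNReal.ofReal K := by
  have hpoint : δ / 2 * ‖z‖ ^ 2 - K ≤ inner ℝ (δ • z) z - c (δ • z) := by
    have hcz := hc (δ • z)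
    have hsq : (δ * ‖z‖) ^ 2 / (2 * δ) = δ / 2 * ‖z‖ ^ 2 := by field_simp
    rw [norm_smul, Real.norm_of_nonneg hδ.le, hsq] at hcz
    rw [real_inner_smul_left, real_inner_self_eq_norm_sq]
    linarith
  calc ENNReal.ofReal (δ / 2) * ‖z‖ₑ ^ 2
      = ENNReal.ofReal ((δ / 2 * ‖z‖ ^ 2 - K) + K) := by
        rw [sub_add_cancel, ENNReal.ofReal_mul (by positivity), ENNReal.ofReal_pow (norm_nonneg z),
          ofReal_norm]
    _ ≤ ENNReal.ofReal (inner ℝ (δ • z) z - c (δ • z)) + ENNReal.ofReal K :=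
        ENNReal.ofReal_add_le.trans (by gcongr)
    _ ≤ legendreTransform c z + ENNReal.ofReal K := by
        gcongr
        exact ofReal_inner_sub_le_legendreTransform c (δ • z) z

end LegendreTransform

section CumulantGeneratingFunction

variable {E : Type*} [NormedAddCommGroup E] [InnerProductSpace ℝ E]

theorem real_inner_le_sq_div_add_mul_sq {δ : ℝ} (hδ : 0 < δ) (α y : E) :
    inner ℝ α y ≤ ‖α‖ ^ 2 / (2 * δ) + δ / 2 * ‖y‖ ^ 2 := by
  have square : ‖α‖ ^ 2 / (2 * δ) + δ / 2 * ‖y‖ ^ 2 - ‖α‖ * ‖y‖ =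
      (‖α‖ - δ * ‖y‖) ^ 2 / (2 * δ) := by
    field_simp
    ring
  have square_nonneg : 0 ≤ (‖α‖ - δ * ‖y‖) ^ 2 / (2 * δ) := by positivity
  linarith [real_inner_le_norm α y]

variable [MeasurableSpace E]

/-- The cumulant generating function `α ↦ log ∫ exp ⟨α, y⟩ ρ(dy)` of a measure on an inner product
space. It takes the junk value `0` where the integral is infinite, and everywhere if `ρ = 0`. -/
noncomputable def cumulantGeneratingFunction (ρ : Measure E) (α : E) : ℝ :=
  Real.log (∫⁻ y, ENNReal.ofReal (Real.exp (inner ℝ α y)) ∂ρ).toReal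

theorem lintegral_exp_inner_le (ρ : Measure E) {δ : ℝ} (hδ : 0 < δ) (α : E) :
    ∫⁻ y, ENNReal.ofReal (Real.exp (inner ℝ α y)) ∂ρ ≤
      ENNReal.ofReal (Real.exp (‖α‖ ^ 2 / (2 * δ))) *
        ∫⁻ y, ENNReal.ofReal (Real.exp (δ / 2 * ‖y‖ ^ 2)) ∂ρ := by
  rw [← lintegral_const_mul' _ _ ENNReal.ofReal_ne_top]
  refine lintegral_mono fun y => ?_
  rw [← ENNReal.ofReal_mul (Real.exp_pos _).le, ← Real.exp_add]
  gcongr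
  exact real_inner_le_sq_div_add_mul_sq hδ α y

theorem lintegral_exp_inner_pos [OpensMeasurableSpace E] (ρ : Measure E) [NeZero ρ] (α : E) :
    0 < ∫⁻ y, ENNReal.ofReal (Real.exp (inner ℝ α y)) ∂ρ := by
  have hmeas : Measurable fun y : E => ENNReal.ofReal (Real.exp (inner ℝ α y)) :=
    (ENNReal.continuous_ofReal.comp (by fun_prop)).measurable
  rw [lintegral_pos_iff_support hmeas, Function.support_eq_univ]
  · exact NeZero.pos (ρ Set.univ)
  · exact fun y => (ENNReal.ofReal_pos.2 (Real.exp_pos _)).ne'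

theorem cumulantGeneratingFunction_le [OpensMeasurableSpace E] (ρ : Measure E) [NeZero ρ] {δ : ℝ}
    (hδ : 0 < δ) (hfin : ∫⁻ y, ENNReal.ofReal (Real.exp (δ / 2 * ‖y‖ ^ 2)) ∂ρ ≠ ∞) (α : E) :
    cumulantGeneratingFunction ρ α ≤ ‖α‖ ^ 2 / (2 * δ) +
      Real.log (∫⁻ y, ENNReal.ofReal (Real.exp (δ / 2 * ‖y‖ ^ 2)) ∂ρ).toReal := by
  set C := ∫⁻ y, ENNReal.ofReal (Real.exp (δ / 2 * ‖y‖ ^ 2)) ∂ρ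
  have hle := lintegral_exp_inner_le ρ hδ α
  have hpos := lintegral_exp_inner_pos ρ α
  have hbound_ne_top : ENNReal.ofReal (Real.exp (‖α‖ ^ 2 / (2 * δ))) * C ≠ ∞ :=
    ENNReal.mul_ne_top ENNReal.ofReal_ne_top hfin
  have hC : C.toReal ≠ 0 :=
    ENNReal.toReal_ne_zero.2 ⟨right_ne_zero_of_mul (hpos.trans_le hle).ne', hfin⟩
  calc Real.log (∫⁻ y, ENNReal.ofReal (Real.exp (inner ℝ α y)) ∂ρ).toReal
      ≤ Real.log (ENNReal.ofReal (Real.exp (‖α‖ ^ 2 / (2 * δ))) * C).toReal :=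
        Real.log_le_log (ENNReal.toReal_pos hpos.ne' (ne_top_of_le_ne_top hbound_ne_top hle))
          (ENNReal.toReal_mono hbound_ne_top hle)
    _ = ‖α‖ ^ 2 / (2 * δ) + Real.log C.toReal := by
        rw [ENNReal.toReal_mul, ENNReal.toReal_ofReal (Real.exp_pos _).le,
          Real.log_mul (Real.exp_ne_zero _) hC, Real.log_exp]

end CumulantGeneratingFunction

theorem rate_functional_weakly_compact_level_sets_general
    {Λ E : Type*} [MeasurableSpace Λ] (θ : Measure Λ) [IsFiniteMeasure θ]
    [NormedAddCommGroup E] [InnerProductSpace ℝ E] [CompleteSpace E]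
    [MeasurableSpace E] [BorelSpace E] (ρ : Measure E) [NeZero ρ]
    {δ : ℝ} (hδ : 0 < δ) (hfin : ∫⁻ y, ENNReal.ofReal (Real.exp (δ / 2 * ‖y‖ ^ 2)) ∂ρ ≠ ∞)
    {M : ℝ≥0∞} (hM : M ≠ ∞) :
    IsCompact (toWeakSpace ℝ (Lp E 2 θ) '' {f : Lp E 2 θ |
      integralFunctional (legendreTransform (cumulantGeneratingFunction ρ)) f ≤ M}) :=
  isCompact_toWeakSpace_integralFunctional_le (convexOn_legendreTransform _)
    (lowerSemicontinuous_legendreTransform _) (ENNReal.ofReal_pos.2 (half_pos hδ)).ne'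
    ENNReal.ofReal_ne_top (ofReal_mul_enorm_sq_le_legendreTransform_add hδ
      (cumulantGeneratingFunction_le ρ hδ hfin)) hM

/-- Theorem 4.2: assume there exists `δ > 0` such that `∫ exp(δ|y|²/2) ρ(dy) < ∞`. Then for
every `M < ∞` the level set `{f ∈ L²(Λ,θ;ℝ^d) : I(f) ≤ M}` is compact with respect to the weak
topology on `L²(Λ,θ;ℝ^d)` (the topology generated by the maps `g ↦ ⟨g,h⟩₂`), where `i` is the
Cramér rate function of `ρ` and `I(f) = ∫_Λ i(f(x)) θ(dx)`. -/
theorem rate_functional_weakly_compact_level_sets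
    {Λ : Type*} [MetricSpace Λ] [TopologicalSpace.SeparableSpace Λ] [CompleteSpace Λ]
    [MeasurableSpace Λ] [BorelSpace Λ]
    (θ : Measure Λ) [IsProbabilityMeasure θ]
    (d : ℕ) (hd : 0 < d)
    (ρ : Measure (EuclideanSpace ℝ (Fin d))) [IsProbabilityMeasure ρ]
    (c : EuclideanSpace ℝ (Fin d) → ℝ)
    (hc : ∀ α, c α =
      Real.log ((∫⁻ y, ENNReal.ofReal (Real.exp (inner (𝕜 := ℝ) α y)) ∂ρ).toReal))
    (i : EuclideanSpace ℝ (Fin d) → ℝ≥0∞)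
    (hi : ∀ z, i z = ⨆ α : EuclideanSpace ℝ (Fin d),
      ENNReal.ofReal ((inner (𝕜 := ℝ) α z : ℝ) - c α))
    (I : Lp (EuclideanSpace ℝ (Fin d)) 2 θ → ℝ≥0∞)
    (hI : ∀ f, I f = ∫⁻ x, i (f x) ∂θ)
    (γ : ℕ → ℕ) (hγpos : ∀ r, 0 < γ r) (hγtop : Tendsto γ atTop atTop)
    (D : (r : ℕ) → Fin (γ r) → Set Λ)
    (hDmeas : ∀ r k, MeasurableSet (D r k))
    (hDdisj : ∀ r, ∀ k k' : Fin (γ r), k ≠ k' → Disjoint (D r k) (D r k'))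
    (hDcover : ∀ r, (⋃ k, D r k) = Set.univ)
    (hDmeasure : ∀ r k, θ (D r k) = 1 / (γ r : ℝ≥0∞))
    (hDdiam : Tendsto (fun r => ⨆ k : Fin (γ r), EMetric.diam (D r k)) atTop (𝓝 0))
    (δ : ℝ) (hδ : 0 < δ)
    (hfin : (∫⁻ y, ENNReal.ofReal (Real.exp (δ / 2 * ‖y‖ ^ 2)) ∂ρ) < ⊤) :
    ∀ M : ℝ≥0∞, M ≠ ⊤ →
      @IsCompact (Lp (EuclideanSpace ℝ (Fin d)) 2 θ)
        (TopologicalSpace.induced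
          (fun f : Lp (EuclideanSpace ℝ (Fin d)) 2 θ =>
            (fun h : Lp (EuclideanSpace ℝ (Fin d)) 2 θ => (inner (𝕜 := ℝ) f h : ℝ)))
          Pi.topologicalSpace)
        {f : Lp (EuclideanSpace ℝ (Fin d)) 2 θ | I f ≤ M} := by
  obtain rfl : c = cumulantGeneratingFunction ρ := funext hc
  obtain rfl : i = legendreTransform (cumulantGeneratingFunction ρ) := funext hi
  obtain rfl : I = integralFunctional _ := funext hI
  exact fun M hM => isCompact_toWeakSpace_image_iff_inner.1
    (rate_functional_weakly_compact_level_sets_general θ ρ hδ hfin.ne hM)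
end
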